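/- Let 0 < s < 1 and let σ : ℝ^N → (0,∞) be a screening function with 0 < inf_{ℝ^N} σ ≤ sup_{ℝ^N} σ < ∞. Then there exists a constant c = c(N, s, σ) > 0 such that for every Schwartz function f : ℝ^N → ℝ: c^{−1} ∫_{ℝ^N} min{|ξ|^{2s}, |ξ|^2} |f̂(ξ)|^2 dξ ≤ |f|²_{W̃^{s,2}_{(σ)}(ℝ^N)} ≤ c ∫_{ℝ^N} min{|ξ|^{2s}, |ξ|^2} |f̂(ξ)|^2 dξ, where f̂ denotes the Fourier transform of f. -/

import Mathlib

/-!
By Plancherel's identity applied to `f (· + h) - f`, the seminorm with constant screening radius `r`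
is `∫ K_r(ξ) ‖𝓕 f ξ‖² dξ`, where `K_r(ξ) = ∫_{‖h‖ < r} ‖𝐞 ⟪h, ξ⟫ - 1‖² / ‖h‖ ^ (2 s + d) dh` and `d`
is the dimension. A screening function with values in `[m, M]` gives a seminorm between those of
radii `m` and `M`, so it suffices to compare `K_r(ξ)` with `min (‖ξ‖ ^ (2 s)) (‖ξ‖ ^ 2)`.

From above, `‖𝐞 ⟪h, ξ⟫ - 1‖²` is bounded by `4 π² ‖ξ‖² ‖h‖²`, which is integrable against the kernel
near the origin, and by `4 π² min 1 (‖ξ‖² ‖h‖²)`, whose integral over the whole space scales like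
`‖ξ‖ ^ (2 s)`. From below, on the part of the ball of radius `ρ = min r (1 / (2 ‖ξ‖))` where `h`
points roughly in the direction of `ξ`, `‖𝐞 ⟪h, ξ⟫ - 1‖²` is comparable to `‖ξ‖² ρ²`.
-/

open MeasureTheory Metric
open scoped ENNReal FourierTransform

/-- The `p`-th power (`p = 2`) of the screened homogeneous fractional Sobolev seminorm
on all of `ℝ^N`:
`|f|²_{W̃^{s,2}_{(σ)}(ℝ^N)} = ∫_{ℝ^N} ∫_{B(0,σ(x))} |f(x+h)-f(x)|² / |h|^{2s+N} dh dx`,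
valued in `ℝ≥0∞`, for a real-valued screening function `σ`. -/
noncomputable def screenedSeminormSq (N : ℕ) (s : ℝ)
    (σ : EuclideanSpace ℝ (Fin N) → ℝ)
    (f : EuclideanSpace ℝ (Fin N) → ℝ) : ℝ≥0∞ :=
  ∫⁻ x, ∫⁻ h in Metric.ball (0 : EuclideanSpace ℝ (Fin N)) (σ x),
      ENNReal.ofReal (|f (x + h) - f x| ^ 2 / ‖h‖ ^ (2 * s + N))

open Module
open scoped SchwartzMap RealInnerProductSpace

section FourierChar

lemma norm_fourierChar_sub_one (t : ℝ) : ‖(𝐞 t : ℂ) - 1‖ = 2 * |Real.sin (Real.pi * t)| := by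
  rw [Real.fourierChar_apply, mul_comm, Complex.norm_exp_I_mul_ofReal_sub_one, Real.norm_eq_abs,
    abs_mul, abs_two, show 2 * Real.pi * t / 2 = Real.pi * t by ring]

lemma norm_fourierChar_sub_one_sq_le (t : ℝ) :
    ‖(𝐞 t : ℂ) - 1‖ ^ 2 ≤ 4 * Real.pi ^ 2 * min 1 (t ^ 2) := by
  have sin_sq_le : Real.sin (Real.pi * t) ^ 2 ≤ Real.pi ^ 2 * min 1 (t ^ 2) := by
    rw [mul_min_of_nonneg _ _ (sq_nonneg _), ← mul_pow]
    refine le_min ?_ (sq_le_sq.2 Real.abs_sin_le_abs)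
    nlinarith [Real.sin_sq_le_one (Real.pi * t), Real.pi_gt_three]
  rw [norm_fourierChar_sub_one, mul_pow, sq_abs]
  linarith

lemma four_mul_abs_le_norm_fourierChar_sub_one {t : ℝ} (ht : |t| ≤ 1 / 2) :
    4 * |t| ≤ ‖(𝐞 t : ℂ) - 1‖ := by
  have abs_pi_mul : |Real.pi * t| = Real.pi * |t| := by rw [abs_mul, abs_of_pos Real.pi_pos]
  have two_mul_abs_le : 2 / Real.pi * |Real.pi * t| ≤ |Real.sin (Real.pi * t)| :=
    Real.mul_abs_le_abs_sin (by rw [abs_pi_mul]; nlinarith [Real.pi_pos])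
  rw [abs_pi_mul, ← mul_assoc, div_mul_cancel₀ _ Real.pi_ne_zero] at two_mul_abs_le
  rw [norm_fourierChar_sub_one]
  linarith

end FourierChar

section KernelIntegrals

lemma ofReal_mul_norm_sq {G : Type*} [NormedAddCommGroup G] {a : ℝ} (ha : 0 ≤ a) (v : G) :
    ENNReal.ofReal (a * ‖v‖ ^ 2) = ENNReal.ofReal a * ‖v‖ₑ ^ 2 := by
  rw [ENNReal.ofReal_mul ha, ENNReal.ofReal_pow (norm_nonneg v), ofReal_norm]

lemma setLIntegral_norm_sq_div_rpow {E G : Type*} [NormedAddCommGroup E] [MeasurableSpace E]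
    [OpensMeasurableSpace E] [NormedAddCommGroup G] (μ : Measure E) (A : Set E) (p : ℝ)
    (g : E → G) :
    ∫⁻ h in A, ENNReal.ofReal (‖g h‖ ^ 2 / ‖h‖ ^ p) ∂μ =
      ∫⁻ h, ‖g h‖ₑ ^ 2 ∂(μ.restrict A).withDensity fun h => ENNReal.ofReal (‖h‖ ^ p)⁻¹ := by
  rw [lintegral_withDensity_eq_lintegral_mul_non_measurable _ (by fun_prop)
    (.of_forall fun _ => ENNReal.ofReal_lt_top)]
  refine lintegral_congr fun h => ?_
  rw [div_eq_inv_mul, ofReal_mul_norm_sq (by positivity), Pi.mul_apply]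

variable {E : Type*} [NormedAddCommGroup E] [NormedSpace ℝ E] [FiniteDimensional ℝ E]
  [MeasurableSpace E] [BorelSpace E] (μ : Measure E) [μ.IsAddHaarMeasure]

lemma setLIntegral_ball_norm_sq_div_rpow_ne_top {p : ℝ} (hp : p < finrank ℝ E + 2) (r : ℝ) :
    ∫⁻ h in ball (0 : E) r, ENNReal.ofReal (‖h‖ ^ 2 / ‖h‖ ^ p) ∂μ ≠ ∞ := by
  rcases subsingleton_or_nontrivial E with _ | _
  · simp [Subsingleton.elim _ (0 : E)]
  have integrable : IntegrableOn (fun h : E => ‖h‖ ^ 2 / ‖h‖ ^ p) (ball 0 r) μ := by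
    refine integrableOn_ball_of_norm_le_rpow (C := 1) (α := p - 2) finrank_pos (by linarith)
      (ae_restrict_of_ae ?_) (Measurable.aestronglyMeasurable (by fun_prop))
    filter_upwards [Measure.ae_ne μ 0] with h hh
    rw [Real.norm_of_nonneg (by positivity), one_mul, neg_sub,
      Real.rpow_sub (norm_pos_iff.2 hh), Real.rpow_two]
  exact integrable.lintegral_lt_top.ne

lemma setLIntegral_compl_ball_rpow_ne_top {p : ℝ} (hp : finrank ℝ E < p) :
    ∫⁻ h in (ball (0 : E) 1)ᶜ, ENNReal.ofReal (1 / ‖h‖ ^ p) ∂μ ≠ ∞ := by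
  have hp0 : 0 ≤ p := (Nat.cast_nonneg _).trans hp.le
  have bound : ∀ h ∈ (ball (0 : E) 1)ᶜ,
      ENNReal.ofReal (1 / ‖h‖ ^ p) ≤
        ENNReal.ofReal (2 ^ p) * ENNReal.ofReal ((1 + ‖h‖) ^ (-p)) := by
    intro h hh
    have one_le : 1 ≤ ‖h‖ := by simpa using hh
    have h_pos : 0 < ‖h‖ := one_pos.trans_le one_le
    rw [← ENNReal.ofReal_mul (by positivity), Real.rpow_neg (by positivity), ← div_eq_mul_inv,
      ← Real.div_rpow (by positivity) (by positivity), one_div, ← Real.inv_rpow h_pos.le]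
    gcongr
    rw [inv_le_comm₀ h_pos (by positivity), inv_div]
    linarith
  refine ne_top_of_le_ne_top ?_ ((setLIntegral_mono' measurableSet_ball.compl bound).trans
    (setLIntegral_le_lintegral _ _))
  rw [lintegral_const_mul' _ _ ENNReal.ofReal_ne_top]
  exact ENNReal.mul_ne_top ENNReal.ofReal_ne_top (finite_integral_one_add_norm hp).ne

lemma lintegral_min_one_norm_sq_div_rpow_ne_top {p : ℝ} (hp : finrank ℝ E < p)
    (hp' : p < finrank ℝ E + 2) :
    ∫⁻ h : E, ENNReal.ofReal (min 1 (‖h‖ ^ 2) / ‖h‖ ^ p) ∂μ ≠ ∞ := by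
  rw [← lintegral_add_compl _ (measurableSet_ball (x := (0 : E)) (ε := 1))]
  refine ENNReal.add_ne_top.2
    ⟨ne_top_of_le_ne_top (setLIntegral_ball_norm_sq_div_rpow_ne_top μ hp' 1) ?_,
      ne_top_of_le_ne_top (setLIntegral_compl_ball_rpow_ne_top μ hp) ?_⟩ <;> gcongr
  exacts [min_le_right _ _, min_le_left _ _]

lemma lintegral_comp_smul_addHaar (g : E → ℝ≥0∞) {t : ℝ} (ht : t ≠ 0) :
    ∫⁻ h, g (t • h) ∂μ = ENNReal.ofReal |(t ^ finrank ℝ E)⁻¹| * ∫⁻ h, g h ∂μ := by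
  rw [← smul_eq_mul, ← lintegral_smul_measure, ← Measure.map_addHaar_smul μ ht]
  exact (lintegral_map_equiv g (MeasurableEquiv.smul₀ t ht)).symm

lemma lintegral_min_one_mul_norm_sq_div_rpow (p : ℝ) {t : ℝ} (ht : 0 < t) :
    ∫⁻ h : E, ENNReal.ofReal (min 1 ((t * ‖h‖) ^ 2) / ‖h‖ ^ p) ∂μ =
      ENNReal.ofReal (t ^ (p - finrank ℝ E)) *
        ∫⁻ h : E, ENNReal.ofReal (min 1 (‖h‖ ^ 2) / ‖h‖ ^ p) ∂μ := by
  have integrand_eq : ∀ h : E, ENNReal.ofReal (min 1 ((t * ‖h‖) ^ 2) / ‖h‖ ^ p) =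
      ENNReal.ofReal (t ^ p) * ENNReal.ofReal (min 1 (‖t • h‖ ^ 2) / ‖t • h‖ ^ p) := by
    intro h
    rw [← ENNReal.ofReal_mul (by positivity), norm_smul, Real.norm_of_nonneg ht.le,
      Real.mul_rpow ht.le (norm_nonneg h), ← mul_div_assoc,
      mul_div_mul_left _ _ (Real.rpow_pos_of_pos ht p).ne']
  simp_rw [integrand_eq]
  rw [lintegral_const_mul' _ _ ENNReal.ofReal_ne_top,
    lintegral_comp_smul_addHaar μ (fun h => ENNReal.ofReal (min 1 (‖h‖ ^ 2) / ‖h‖ ^ p)) ht.ne',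
    ← mul_assoc, ← ENNReal.ofReal_mul (by positivity), abs_of_pos (by positivity),
    Real.rpow_sub ht, Real.rpow_natCast, div_eq_mul_inv]

end KernelIntegrals

section ScreenedSymbol

variable {E : Type*} [NormedAddCommGroup E] [InnerProductSpace ℝ E]

lemma norm_fourierChar_inner_sub_one_sq_le (h ξ : E) :
    ‖(𝐞 ⟪h, ξ⟫ : ℂ) - 1‖ ^ 2 ≤ 4 * Real.pi ^ 2 * min 1 ((‖ξ‖ * ‖h‖) ^ 2) := by
  refine (norm_fourierChar_sub_one_sq_le _).trans ?_
  gcongr 4 * Real.pi ^ 2 * min 1 ?_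
  rw [mul_comm, ← sq_abs]
  gcongr
  exact abs_real_inner_le_norm h ξ

lemma exists_ball_subset_forall_le_inner (ξ : E) {ρ : ℝ} (hρ : 0 < ρ) :
    ∃ a : E, ball a (ρ / 4) ⊆ ball 0 ρ ∧ ∀ h ∈ ball a (ρ / 4), ρ / 4 * ‖ξ‖ ≤ ⟪h, ξ⟫ := by
  rcases eq_or_ne ξ 0 with rfl | hξ
  · exact ⟨0, ball_subset_ball (by linarith), by simp⟩
  have hξ' : 0 < ‖ξ‖ := norm_pos_iff.2 hξ
  set a : E := (ρ / 2 / ‖ξ‖) • ξ with ha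
  have norm_a : ‖a‖ = ρ / 2 := by
    rw [ha, norm_smul, Real.norm_of_nonneg (by positivity), div_mul_cancel₀ _ hξ'.ne']
  have inner_a : ⟪a, ξ⟫ = ρ / 2 * ‖ξ‖ := by
    rw [ha, real_inner_smul_left, real_inner_self_eq_norm_sq]
    field_simp
  refine ⟨a, ball_subset_ball' (by rw [dist_zero_right, norm_a]; linarith), fun h hh => ?_⟩
  have inner_sub_le : ⟪a - h, ξ⟫ ≤ ρ / 4 * ‖ξ‖ := by
    refine (real_inner_le_norm _ _).trans ?_
    gcongr
    exact (mem_ball_iff_norm'.1 hh).le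
  rw [inner_sub_left, inner_a] at inner_sub_le
  linarith

lemma le_norm_fourierChar_inner_sub_one_sq_div_rpow {p : ℝ} (hp : 0 ≤ p) {ρ : ℝ} {h ξ : E}
    (hh : ‖h‖ ≤ ρ) (le_inner : ρ / 4 * ‖ξ‖ ≤ ⟪h, ξ⟫) (hρξ : ρ * ‖ξ‖ ≤ 1 / 2) :
    (ρ * ‖ξ‖) ^ 2 / ρ ^ p ≤ ‖(𝐞 ⟪h, ξ⟫ : ℂ) - 1‖ ^ 2 / ‖h‖ ^ p := by
  have hρ : 0 ≤ ρ := (norm_nonneg h).trans hh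
  have abs_inner_le : |⟪h, ξ⟫| ≤ 1 / 2 :=
    (abs_real_inner_le_norm h ξ).trans ((by gcongr : ‖h‖ * ‖ξ‖ ≤ ρ * ‖ξ‖).trans hρξ)
  have le_norm_char : ρ * ‖ξ‖ ≤ ‖(𝐞 ⟪h, ξ⟫ : ℂ) - 1‖ := by
    linarith [four_mul_abs_le_norm_fourierChar_sub_one abs_inner_le, le_abs_self ⟪h, ξ⟫]
  rcases eq_or_ne h 0 with rfl | h_ne
  · have : ρ * ‖ξ‖ = 0 := le_antisymm (by simpa using le_norm_char) (by positivity)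
    simp [this]
  · have : 0 < ‖h‖ := norm_pos_iff.2 h_ne
    gcongr

variable [FiniteDimensional ℝ E] [MeasurableSpace E] [BorelSpace E]

/-- The Fourier multiplier of the squared fractional seminorm of order `s` screened at the constant
radius `r`; see `screenedGagliardoSq_const`. -/
noncomputable def screenedSymbol (s r : ℝ) (ξ : E) : ℝ≥0∞ :=
  ∫⁻ h in ball (0 : E) r,
    ENNReal.ofReal (‖(𝐞 ⟪h, ξ⟫ : ℂ) - 1‖ ^ 2 / ‖h‖ ^ (2 * s + finrank ℝ E))

lemma screenedSymbol_le_norm_sq (s r : ℝ) (ξ : E) :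
    screenedSymbol s r ξ ≤ ENNReal.ofReal (4 * Real.pi ^ 2 * ‖ξ‖ ^ 2) *
      ∫⁻ h in ball (0 : E) r, ENNReal.ofReal (‖h‖ ^ 2 / ‖h‖ ^ (2 * s + finrank ℝ E)) := by
  rw [screenedSymbol, ← lintegral_const_mul' _ _ ENNReal.ofReal_ne_top]
  refine lintegral_mono fun h => ?_
  rw [← ENNReal.ofReal_mul (by positivity), ← mul_div_assoc, mul_assoc, ← mul_pow]
  gcongr
  exact (norm_fourierChar_inner_sub_one_sq_le h ξ).trans (by gcongr; exact min_le_right _ _)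

lemma screenedSymbol_le_norm_rpow (s r : ℝ) (ξ : E) :
    screenedSymbol s r ξ ≤ ENNReal.ofReal (4 * Real.pi ^ 2 * ‖ξ‖ ^ (2 * s)) *
      ∫⁻ h : E, ENNReal.ofReal (min 1 (‖h‖ ^ 2) / ‖h‖ ^ (2 * s + finrank ℝ E)) := by
  rcases eq_or_ne ξ 0 with rfl | hξ
  · simp [screenedSymbol]
  have scaling := lintegral_min_one_mul_norm_sq_div_rpow (volume : Measure E)
    (2 * s + finrank ℝ E) (norm_pos_iff.2 hξ)
  rw [add_sub_cancel_right] at scaling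
  rw [ENNReal.ofReal_mul (by positivity), mul_assoc, ← scaling,
    ← lintegral_const_mul' _ _ ENNReal.ofReal_ne_top]
  refine (setLIntegral_le_lintegral _ _).trans (lintegral_mono fun h => ?_)
  rw [← ENNReal.ofReal_mul (by positivity), ← mul_div_assoc]
  gcongr
  exact norm_fourierChar_inner_sub_one_sq_le h ξ

variable (E) in
lemma exists_screenedSymbol_le_mul_min {s : ℝ} (hs0 : 0 < s) (hs1 : s < 1) (r : ℝ) :
    ∃ c ≠ ∞, ∀ ξ : E,
      screenedSymbol s r ξ ≤ c * ENNReal.ofReal (min (‖ξ‖ ^ (2 * s)) (‖ξ‖ ^ 2)) := by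
  set A := ∫⁻ h : E, ENNReal.ofReal (min 1 (‖h‖ ^ 2) / ‖h‖ ^ (2 * s + finrank ℝ E))
  set B := ∫⁻ h in ball (0 : E) r, ENNReal.ofReal (‖h‖ ^ 2 / ‖h‖ ^ (2 * s + finrank ℝ E))
  have hA : A ≠ ∞ := lintegral_min_one_norm_sq_div_rpow_ne_top _ (by linarith) (by linarith)
  have hB : B ≠ ∞ := setLIntegral_ball_norm_sq_div_rpow_ne_top _ (by linarith) r
  refine ⟨ENNReal.ofReal (4 * Real.pi ^ 2) * max A B,
    ENNReal.mul_ne_top ENNReal.ofReal_ne_top (max_lt hA.lt_top hB.lt_top).ne, fun ξ => ?_⟩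
  rw [ENNReal.ofReal_min, mul_min, mul_right_comm, mul_right_comm _ (max A B),
    ← ENNReal.ofReal_mul (by positivity), ← ENNReal.ofReal_mul (by positivity)]
  refine le_min ((screenedSymbol_le_norm_rpow s r ξ).trans ?_)
    ((screenedSymbol_le_norm_sq s r ξ).trans ?_) <;> gcongr
  exacts [le_max_left A B, le_max_right A B]

lemma le_screenedSymbol {s : ℝ} (hs : 0 ≤ s) {r ρ : ℝ} (hρ : 0 < ρ) (hρr : ρ ≤ r) {ξ : E}
    (hρξ : ρ * ‖ξ‖ ≤ 1 / 2) :
    volume (ball (0 : E) 1) / 4 ^ finrank ℝ E * ENNReal.ofReal (‖ξ‖ ^ 2 * ρ ^ (2 - 2 * s)) ≤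
      screenedSymbol s r ξ := by
  set d := finrank ℝ E
  obtain ⟨a, ball_subset, le_inner⟩ := exists_ball_subset_forall_le_inner ξ hρ
  calc volume (ball (0 : E) 1) / 4 ^ d * ENNReal.ofReal (‖ξ‖ ^ 2 * ρ ^ (2 - 2 * s))
      = ENNReal.ofReal ((ρ * ‖ξ‖) ^ 2 / ρ ^ (2 * s + d)) * volume (ball a (ρ / 4)) := by
        have volume_ball : volume (ball a (ρ / 4)) =
            volume (ball (0 : E) 1) / 4 ^ d * ENNReal.ofReal (ρ ^ d) := by
          rw [Measure.addHaar_ball_of_pos _ _ (by positivity), div_pow,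
            ENNReal.ofReal_div_of_pos (by positivity), ENNReal.ofReal_pow (by positivity) d,
            ENNReal.ofReal_pow (by norm_num), ENNReal.ofReal_ofNat]
          simp only [div_eq_mul_inv]
          ring
        rw [volume_ball, mul_left_comm, ← ENNReal.ofReal_mul (by positivity)]
        congr 2
        rw [Real.rpow_sub hρ, Real.rpow_add hρ, Real.rpow_natCast, Real.rpow_two]
        field_simp
    _ = ∫⁻ _ in ball a (ρ / 4), ENNReal.ofReal ((ρ * ‖ξ‖) ^ 2 / ρ ^ (2 * s + d)) :=
        (setLIntegral_const _ _).symm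
    _ ≤ ∫⁻ h in ball a (ρ / 4),
          ENNReal.ofReal (‖(𝐞 ⟪h, ξ⟫ : ℂ) - 1‖ ^ 2 / ‖h‖ ^ (2 * s + d)) :=
        setLIntegral_mono' measurableSet_ball fun h hh => ENNReal.ofReal_le_ofReal <|
          le_norm_fourierChar_inner_sub_one_sq_div_rpow (by positivity)
            (mem_ball_zero_iff.1 (ball_subset hh)).le (le_inner h hh) hρξ
    _ ≤ screenedSymbol s r ξ :=
        lintegral_mono_set (ball_subset.trans (ball_subset_ball hρr))

lemma exists_radius_min_rpow_le (s : ℝ) {r : ℝ} (hr : 0 < r) (t : ℝ) :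
    ∃ ρ, 0 < ρ ∧ ρ ≤ r ∧ ρ * t ≤ 1 / 2 ∧
      min (t ^ (2 * s)) (t ^ 2) ≤
        max (r ^ (2 * s - 2)) (2 ^ (2 - 2 * s)) * (t ^ 2 * ρ ^ (2 - 2 * s)) := by
  rcases le_or_gt (r * t) (1 / 2) with hrt | hrt
  · refine ⟨r, hr, le_rfl, hrt, (min_le_right _ _).trans ?_⟩
    calc t ^ 2 = r ^ (2 * s - 2) * (t ^ 2 * r ^ (2 - 2 * s)) := by
          rw [mul_left_comm, ← Real.rpow_add hr]
          simp
      _ ≤ _ := by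
          gcongr
          exact le_max_left _ _
  · have ht : 0 < t := pos_of_mul_pos_right (one_half_pos.trans hrt) hr.le
    have radius_mul : 1 / (2 * t) * t = 1 / 2 := by field_simp
    refine ⟨1 / (2 * t), by positivity, ?_, radius_mul.le, (min_le_left _ _).trans ?_⟩
    · exact le_of_mul_le_mul_right (radius_mul.trans_le hrt.le) ht
    calc t ^ (2 * s) = 2 ^ (2 - 2 * s) * (t ^ 2 * (1 / (2 * t)) ^ (2 - 2 * s)) := by
          rw [one_div, Real.inv_rpow (by positivity), Real.mul_rpow two_pos.le ht.le,
            Real.rpow_sub ht, Real.rpow_two]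
          field_simp
      _ ≤ _ := by
          gcongr
          exact le_max_right _ _

variable (E) in
lemma exists_min_le_mul_screenedSymbol {s : ℝ} (hs : 0 ≤ s) {r : ℝ} (hr : 0 < r) :
    ∃ c ≠ ∞, ∀ ξ : E,
      ENNReal.ofReal (min (‖ξ‖ ^ (2 * s)) (‖ξ‖ ^ 2)) ≤ c * screenedSymbol s r ξ := by
  set K : ℝ := max (r ^ (2 * s - 2)) (2 ^ (2 - 2 * s))
  set w : ℝ≥0∞ := volume (ball (0 : E) 1) / 4 ^ finrank ℝ E
  have w_ne_zero : w ≠ 0 :=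
    ENNReal.div_ne_zero.2 ⟨(measure_ball_pos _ _ one_pos).ne', by finiteness⟩
  have w_ne_top : w ≠ ∞ := ENNReal.div_ne_top measure_ball_lt_top.ne (by positivity)
  refine ⟨ENNReal.ofReal K * w⁻¹,
    ENNReal.mul_ne_top ENNReal.ofReal_ne_top (ENNReal.inv_ne_top.2 w_ne_zero), fun ξ => ?_⟩
  obtain ⟨ρ, hρ, hρr, hρξ, min_le⟩ := exists_radius_min_rpow_le s hr ‖ξ‖
  calc ENNReal.ofReal (min (‖ξ‖ ^ (2 * s)) (‖ξ‖ ^ 2))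
      ≤ ENNReal.ofReal K * ENNReal.ofReal (‖ξ‖ ^ 2 * ρ ^ (2 - 2 * s)) := by
        rw [← ENNReal.ofReal_mul (by positivity)]
        exact ENNReal.ofReal_le_ofReal min_le
    _ = ENNReal.ofReal K * w⁻¹ * (w * ENNReal.ofReal (‖ξ‖ ^ 2 * ρ ^ (2 - 2 * s))) := by
        rw [mul_assoc, ENNReal.inv_mul_cancel_left w_ne_zero w_ne_top]
    _ ≤ ENNReal.ofReal K * w⁻¹ * screenedSymbol s r ξ := by
        gcongr
        exact le_screenedSymbol hs hρ hρr hρξ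

end ScreenedSymbol

section Plancherel

variable {E F : Type*} [NormedAddCommGroup E] [InnerProductSpace ℝ E] [FiniteDimensional ℝ E]
  [MeasurableSpace E] [BorelSpace E]

lemma fourier_comp_add_right [NormedAddCommGroup F] [NormedSpace ℂ F] (f : E → F) (h ξ : E) :
    𝓕 (fun x => f (x + h)) ξ = 𝐞 ⟪h, ξ⟫ • 𝓕 f ξ :=
  congrFun (VectorFourier.fourierIntegral_comp_add_right 𝐞 volume (innerₗ E) f h) ξ

variable [NormedAddCommGroup F] [InnerProductSpace ℂ F] [CompleteSpace F]

lemma lintegral_enorm_sq_fourier (f : 𝓢(E, F)) :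
    ∫⁻ ξ, ‖𝓕 f ξ‖ₑ ^ 2 = ∫⁻ x, ‖f x‖ₑ ^ 2 := by
  have lintegral_eq (g : 𝓢(E, F)) :
      ∫⁻ x, ‖g x‖ₑ ^ 2 = ENNReal.ofReal (∫ x, ‖g x‖ ^ 2) := by
    rw [ofReal_integral_eq_lintegral_ofReal ((g.memLp 2 volume).integrable_norm_pow two_ne_zero)
      (.of_forall fun _ => by positivity)]
    simp only [ENNReal.ofReal_pow (norm_nonneg _), ofReal_norm]
  rw [lintegral_eq, lintegral_eq, SchwartzMap.integral_norm_sq_fourier]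

lemma lintegral_enorm_add_sub_sq (f : 𝓢(E, F)) (h : E) :
    ∫⁻ x, ‖f (x + h) - f x‖ₑ ^ 2 =
      ∫⁻ ξ, ‖(𝐞 ⟪h, ξ⟫ : ℂ) - 1‖ₑ ^ 2 * ‖𝓕 f ξ‖ₑ ^ 2 := by
  set g : 𝓢(E, F) := f.compSubConstCLM ℂ (-h)
  have g_eq : g = fun x => f (x + h) := by
    ext x
    simp [g]
  have fourier_sub (ξ : E) : 𝓕 (g - f) ξ = ((𝐞 ⟪h, ξ⟫ : ℂ) - 1) • 𝓕 f ξ := by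
    have fourier_map_sub : 𝓕 (g - f) = 𝓕 g - 𝓕 f :=
      map_sub (FourierTransform.fourierCLM ℂ 𝓢(E, F)) g f
    rw [fourier_map_sub, sub_apply, SchwartzMap.fourier_coe, g_eq,
      fourier_comp_add_right, SchwartzMap.fourier_coe, Circle.smul_def, sub_smul, one_smul]
  calc ∫⁻ x, ‖f (x + h) - f x‖ₑ ^ 2 = ∫⁻ x, ‖(g - f) x‖ₑ ^ 2 := by simp [g_eq]
    _ = ∫⁻ ξ, ‖𝓕 (g - f) ξ‖ₑ ^ 2 := (lintegral_enorm_sq_fourier _).symm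
    _ = ∫⁻ ξ, ‖(𝐞 ⟪h, ξ⟫ : ℂ) - 1‖ₑ ^ 2 * ‖𝓕 f ξ‖ₑ ^ 2 := by
      simp only [fourier_sub, enorm_smul, mul_pow]

lemma lintegral_lintegral_enorm_add_sub_sq (ν : Measure E) [SFinite ν] (f : 𝓢(E, F)) :
    ∫⁻ x, ∫⁻ h, ‖f (x + h) - f x‖ₑ ^ 2 ∂ν =
      ∫⁻ ξ, (∫⁻ h, ‖(𝐞 ⟪h, ξ⟫ : ℂ) - 1‖ₑ ^ 2 ∂ν) * ‖𝓕 f ξ‖ₑ ^ 2 := by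
  have : Continuous fun q : E × E => (𝐞 ⟪q.1, q.2⟫ : ℂ) :=
    continuous_subtype_val.comp (Real.continuous_fourierChar.comp continuous_inner)
  calc ∫⁻ x, ∫⁻ h, ‖f (x + h) - f x‖ₑ ^ 2 ∂ν
      = ∫⁻ h, (∫⁻ x, ‖f (x + h) - f x‖ₑ ^ 2) ∂ν :=
        lintegral_lintegral_swap (by unfold Function.uncurry; fun_prop)
    _ = ∫⁻ h, (∫⁻ ξ, ‖(𝐞 ⟪h, ξ⟫ : ℂ) - 1‖ₑ ^ 2 * ‖𝓕 f ξ‖ₑ ^ 2) ∂ν := by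
        simp only [lintegral_enorm_add_sub_sq]
    _ = ∫⁻ ξ, ∫⁻ h, ‖(𝐞 ⟪h, ξ⟫ : ℂ) - 1‖ₑ ^ 2 * ‖𝓕 f ξ‖ₑ ^ 2 ∂ν :=
        lintegral_lintegral_swap (by unfold Function.uncurry; fun_prop)
    _ = ∫⁻ ξ, (∫⁻ h, ‖(𝐞 ⟪h, ξ⟫ : ℂ) - 1‖ₑ ^ 2 ∂ν) * ‖𝓕 f ξ‖ₑ ^ 2 := by
        simp only [lintegral_mul_const' _ _ (ENNReal.pow_ne_top enorm_ne_top)]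

end Plancherel

section ScreenedGagliardo

variable {E F : Type*} [NormedAddCommGroup E] [InnerProductSpace ℝ E] [FiniteDimensional ℝ E]
  [MeasurableSpace E] [BorelSpace E]

/-- The squared screened fractional seminorm of a map from a Euclidean space of any dimension to a
normed group; `screenedSeminormSq` is the case of real-valued functions on `ℝ^N`. -/
noncomputable def screenedGagliardoSq [NormedAddCommGroup F] (s : ℝ) (σ : E → ℝ) (f : E → F) :
    ℝ≥0∞ :=
  ∫⁻ x, ∫⁻ h in ball (0 : E) (σ x),
    ENNReal.ofReal (‖f (x + h) - f x‖ ^ 2 / ‖h‖ ^ (2 * s + finrank ℝ E))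

lemma screenedGagliardoSq_mono [NormedAddCommGroup F] (s : ℝ) {σ τ : E → ℝ} (hστ : σ ≤ τ)
    (f : E → F) : screenedGagliardoSq s σ f ≤ screenedGagliardoSq s τ f :=
  lintegral_mono fun x => lintegral_mono_set (ball_subset_ball (hστ x))

variable [NormedAddCommGroup F] [InnerProductSpace ℂ F] [CompleteSpace F]

lemma screenedGagliardoSq_const (s r : ℝ) (f : 𝓢(E, F)) :
    screenedGagliardoSq s (fun _ => r) f = ∫⁻ ξ, screenedSymbol s r ξ * ‖𝓕 f ξ‖ₑ ^ 2 := by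
  set ν : Measure E := (volume.restrict (ball 0 r)).withDensity fun h =>
    ENNReal.ofReal (‖h‖ ^ (2 * s + finrank ℝ E))⁻¹
  calc screenedGagliardoSq s (fun _ => r) f
      = ∫⁻ x, ∫⁻ h, ‖f (x + h) - f x‖ₑ ^ 2 ∂ν :=
        lintegral_congr fun _ => setLIntegral_norm_sq_div_rpow ..
    _ = ∫⁻ ξ, (∫⁻ h, ‖(𝐞 ⟪h, ξ⟫ : ℂ) - 1‖ₑ ^ 2 ∂ν) * ‖𝓕 f ξ‖ₑ ^ 2 :=
        lintegral_lintegral_enorm_add_sub_sq ν f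
    _ = ∫⁻ ξ, screenedSymbol s r ξ * ‖𝓕 f ξ‖ₑ ^ 2 :=
        lintegral_congr fun ξ => by rw [screenedSymbol, setLIntegral_norm_sq_div_rpow]

variable (E F) in
lemma exists_lintegral_min_mul_le_screenedGagliardoSq {s : ℝ} (hs : 0 ≤ s) {m : ℝ} (hm : 0 < m) :
    ∃ c ≠ ∞, ∀ σ : E → ℝ, (∀ x, m ≤ σ x) → ∀ f : 𝓢(E, F),
      ∫⁻ ξ, ENNReal.ofReal (min (‖ξ‖ ^ (2 * s)) (‖ξ‖ ^ 2) * ‖𝓕 f ξ‖ ^ 2) ≤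
        c * screenedGagliardoSq s σ f := by
  obtain ⟨c, hc, min_le⟩ := exists_min_le_mul_screenedSymbol E hs hm
  refine ⟨c, hc, fun σ hσ f => ?_⟩
  calc ∫⁻ ξ, ENNReal.ofReal (min (‖ξ‖ ^ (2 * s)) (‖ξ‖ ^ 2) * ‖𝓕 f ξ‖ ^ 2)
      ≤ ∫⁻ ξ, c * (screenedSymbol s m ξ * ‖𝓕 f ξ‖ₑ ^ 2) := by
        refine lintegral_mono fun ξ => ?_
        rw [ofReal_mul_norm_sq (by positivity), ← mul_assoc]
        gcongr
        exact min_le ξ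
    _ = c * screenedGagliardoSq s (fun _ => m) f := by
        rw [lintegral_const_mul' _ _ hc, screenedGagliardoSq_const]
    _ ≤ c * screenedGagliardoSq s σ f := by
        gcongr
        exact screenedGagliardoSq_mono s hσ f

variable (E F) in
lemma exists_screenedGagliardoSq_le_lintegral_min_mul {s : ℝ} (hs0 : 0 < s) (hs1 : s < 1)
    (M : ℝ) :
    ∃ c ≠ ∞, ∀ σ : E → ℝ, (∀ x, σ x ≤ M) → ∀ f : 𝓢(E, F),
      screenedGagliardoSq s σ f ≤
        c * ∫⁻ ξ, ENNReal.ofReal (min (‖ξ‖ ^ (2 * s)) (‖ξ‖ ^ 2) * ‖𝓕 f ξ‖ ^ 2) := by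
  obtain ⟨c, hc, symbol_le⟩ := exists_screenedSymbol_le_mul_min E hs0 hs1 M
  refine ⟨c, hc, fun σ hσ f => ?_⟩
  calc screenedGagliardoSq s σ f ≤ ∫⁻ ξ, screenedSymbol s M ξ * ‖𝓕 f ξ‖ₑ ^ 2 :=
        (screenedGagliardoSq_mono s hσ f).trans_eq (screenedGagliardoSq_const s M f)
    _ ≤ ∫⁻ ξ, c * ENNReal.ofReal (min (‖ξ‖ ^ (2 * s)) (‖ξ‖ ^ 2) * ‖𝓕 f ξ‖ ^ 2) := by
        refine lintegral_mono fun ξ => ?_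
        rw [ofReal_mul_norm_sq (by positivity), ← mul_assoc]
        gcongr
        exact symbol_le ξ
    _ = c * ∫⁻ ξ, ENNReal.ofReal (min (‖ξ‖ ^ (2 * s)) (‖ξ‖ ^ 2) * ‖𝓕 f ξ‖ ^ 2) :=
        lintegral_const_mul' _ _ hc

variable (E F) in
theorem statement15_general {s : ℝ} (hs0 : 0 < s) (hs1 : s < 1) {m : ℝ} (hm : 0 < m) (M : ℝ) :
    ∃ c : ℝ, 0 < c ∧ ∀ σ : E → ℝ, (∀ x, m ≤ σ x ∧ σ x ≤ M) → ∀ f : 𝓢(E, F),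
      (∫⁻ ξ, ENNReal.ofReal (min (‖ξ‖ ^ (2 * s)) (‖ξ‖ ^ 2) * ‖𝓕 f ξ‖ ^ 2)) ≤
          ENNReal.ofReal c * screenedGagliardoSq s σ f ∧
        screenedGagliardoSq s σ f ≤ ENNReal.ofReal c *
          ∫⁻ ξ, ENNReal.ofReal (min (‖ξ‖ ^ (2 * s)) (‖ξ‖ ^ 2) * ‖𝓕 f ξ‖ ^ 2) := by
  obtain ⟨c₁, hc₁, lower⟩ := exists_lintegral_min_mul_le_screenedGagliardoSq E F hs0.le hm
  obtain ⟨c₂, hc₂, upper⟩ := exists_screenedGagliardoSq_le_lintegral_min_mul E F hs0 hs1 M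
  have hc : max 1 (max c₁ c₂) ≠ ∞ := by simp [hc₁, hc₂]
  refine ⟨(max 1 (max c₁ c₂)).toReal, ENNReal.toReal_pos (by positivity) hc, fun σ hσ f => ?_⟩
  rw [ENNReal.ofReal_toReal hc]
  constructor
  · refine (lower σ (fun x => (hσ x).1) f).trans ?_
    gcongr
    exact (le_max_left c₁ c₂).trans (le_max_right 1 _)
  · refine (upper σ (fun x => (hσ x).2) f).trans ?_
    gcongr
    exact (le_max_right c₁ c₂).trans (le_max_right 1 _)

lemma screenedSeminormSq_eq_screenedGagliardoSq (N : ℕ) (s : ℝ)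
    (σ f : EuclideanSpace ℝ (Fin N) → ℝ) :
    screenedSeminormSq N s σ f = screenedGagliardoSq s σ fun x => (f x : ℂ) := by
  simp only [screenedSeminormSq, screenedGagliardoSq, ← Complex.ofReal_sub, Complex.norm_real,
    Real.norm_eq_abs, finrank_euclideanSpace_fin]

end ScreenedGagliardo

/-- Let `0 < s < 1` and let `σ : ℝ^N → (0,∞)` be a screening function
with `0 < inf σ ≤ sup σ < ∞`.  Then there is a constant `c = c(N,s,σ) > 0` so that for
every Schwartz function `f : ℝ^N → ℝ`:
`c⁻¹ ∫ min{|ξ|^{2s}, |ξ|²} |f̂(ξ)|² dξ ≤ |f|²_{W̃^{s,2}_{(σ)}}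
  ≤ c ∫ min{|ξ|^{2s}, |ξ|²} |f̂(ξ)|² dξ`, where `f̂` is the Fourier transform. -/
theorem statement15 (N : ℕ) (s : ℝ) (hs0 : 0 < s) (hs1 : s < 1)
    (σ : EuclideanSpace ℝ (Fin N) → ℝ) (hσlsc : LowerSemicontinuous σ)
    (m M : ℝ) (hm : 0 < m) (hσbd : ∀ x, m ≤ σ x ∧ σ x ≤ M) :
    ∃ c : ℝ, 0 < c ∧
      ∀ f : SchwartzMap (EuclideanSpace ℝ (Fin N)) ℝ,
        (∫⁻ ξ, ENNReal.ofReal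
              (min (‖ξ‖ ^ (2 * s)) (‖ξ‖ ^ 2) *
                ‖𝓕 (fun x => (f x : ℂ)) ξ‖ ^ 2))
            ≤ ENNReal.ofReal c * screenedSeminormSq N s σ f ∧
        screenedSeminormSq N s σ f
            ≤ ENNReal.ofReal c *
              ∫⁻ ξ, ENNReal.ofReal
                (min (‖ξ‖ ^ (2 * s)) (‖ξ‖ ^ 2) *
                  ‖𝓕 (fun x => (f x : ℂ)) ξ‖ ^ 2) := by
  obtain ⟨c, hc, bounds⟩ := statement15_general (EuclideanSpace ℝ (Fin N)) ℂ hs0 hs1 hm M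
  refine ⟨c, hc, fun f => ?_⟩
  rw [screenedSeminormSq_eq_screenedGagliardoSq]
  exact bounds σ hσbd (f.postcompCLM Complex.ofRealCLM)
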